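/- Let (G,P) be a quasi-lattice ordered group, (E,φ) a finitely aligned product system of graphs over P, and {t_λ : λ ∈ E¹} a Toeplitz–Cuntz–Krieger E-family in a C*-algebra B. Let F ⊆ E¹ be finite with s(λ) ∈ F for every λ ∈ F. Then ∑_{λ∈∨F} Q^{∨F}_λ = ∑_{v∈s(F)} t_v, and for every λ ∈ ∨F, t_λ t_λ* = ∑ Q^{∨F}_{λλ'}, the sum over those λ' ∈ E¹ with λλ' defined and λλ' ∈ ∨F. -/

import Mathlib

open scoped Classical

noncomputable section

namespace PSG

variable {G : Type*} [Group G] {Λ : Type*}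

/-- `g ≤ h` in the left-invariant partial order induced by the submonoid `P`. -/
def qle (P : Submonoid G) (g h : G) : Prop := g⁻¹ * h ∈ P

/-- `r` is a common upper bound of `p` and `q` in `P`. -/
def IsUB (P : Submonoid G) (p q r : G) : Prop := r ∈ P ∧ qle P p r ∧ qle P q r

/-- `r` is the least common upper bound of `p` and `q` in `P`. -/
def IsLUB2 (P : Submonoid G) (p q r : G) : Prop :=
  IsUB P p q r ∧ ∀ r', IsUB P p q r' → qle P r r'

/-- `r` is the least upper bound in `P` of the set of degrees `D`. -/
def IsLUBFam (P : Submonoid G) (D : Set G) (r : G) : Prop :=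
  r ∈ P ∧ (∀ p ∈ D, qle P p r) ∧ ∀ r' ∈ P, (∀ p ∈ D, qle P p r') → qle P r r'

/-- `(G, P)` is quasi-lattice ordered: `P ∩ P⁻¹ = {1}` and every pair of elements of `P`
with a common upper bound in `P` has a least upper bound in `P`. -/
def QuasiLatticeOrdered (P : Submonoid G) : Prop :=
  (∀ g ∈ P, g⁻¹ ∈ P → g = 1) ∧
    ∀ p ∈ P, ∀ q ∈ P, (∃ r, IsUB P p q r) → ∃ r, IsLUB2 P p q r

/-- A product system of graphs over `P`, encoded on a single edge set `Λ` (which contains the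
vertices as the elements of degree `1`), with degree map `d`, source and range maps `src`, `rng`
(valued in vertices), and partial multiplication `mul` (meaningful when `rng a = src b`). -/
structure IsProductSystem (P : Submonoid G) (d : Λ → G) (src rng : Λ → Λ)
    (mul : Λ → Λ → Λ) : Prop where
  countable : Countable Λ
  d_mem : ∀ a, d a ∈ P
  d_src : ∀ a, d (src a) = 1
  d_rng : ∀ a, d (rng a) = 1
  src_vertex : ∀ v, d v = 1 → src v = v
  rng_vertex : ∀ v, d v = 1 → rng v = v
  d_mul : ∀ a b, rng a = src b → d (mul a b) = d a * d b
  src_mul : ∀ a b, rng a = src b → src (mul a b) = src a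
  rng_mul : ∀ a b, rng a = src b → rng (mul a b) = rng b
  mul_assoc' : ∀ a b c, rng a = src b → rng b = src c →
    mul (mul a b) c = mul a (mul b c)
  src_mul_self : ∀ a, mul (src a) a = a
  mul_rng_self : ∀ a, mul a (rng a) = a
  factor : ∀ p q : G, p ∈ P → q ∈ P → ∀ c, d c = p * q →
    ∃! ab : Λ × Λ, d ab.1 = p ∧ d ab.2 = q ∧ rng ab.1 = src ab.2 ∧ mul ab.1 ab.2 = c

/-- `a` is an initial segment of `c`: `c = a • b` for some (necessarily unique) `b`. -/
def IsInit (src rng : Λ → Λ) (mul : Λ → Λ → Λ) (a c : Λ) : Prop :=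
  ∃ b, rng a = src b ∧ mul a b = c

/-- The set of minimal common extensions of `μ` and `ν`. -/
def MCE (P : Submonoid G) (d : Λ → G) (src rng : Λ → Λ) (mul : Λ → Λ → Λ)
    (μ ν : Λ) : Set Λ :=
  {γ | IsInit src rng mul μ γ ∧ IsInit src rng mul ν γ ∧ IsLUB2 P (d μ) (d ν) (d γ)}

/-- The product system is finitely aligned. -/
def FinitelyAligned (P : Submonoid G) (d : Λ → G) (src rng : Λ → Λ)
    (mul : Λ → Λ → Λ) : Prop :=
  ∀ μ ν : Λ, (MCE P d src rng mul μ ν).Finite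

/-- The set of minimal common extensions of a set `S` of edges. -/
def MCEset (P : Submonoid G) (d : Λ → G) (src rng : Λ → Λ) (mul : Λ → Λ → Λ)
    (S : Set Λ) : Set Λ :=
  {γ | (∀ α ∈ S, IsInit src rng mul α γ) ∧ IsLUBFam P (d '' S) (d γ)}

/-- `∨F`: the union of `MCE(S)` over the nonempty subsets `S ⊆ F`. -/
def vee (P : Submonoid G) (d : Λ → G) (src rng : Λ → Λ) (mul : Λ → Λ → Λ)
    (F : Finset Λ) : Set Λ :=
  {γ | ∃ S : Finset Λ, S.Nonempty ∧ S ⊆ F ∧ γ ∈ MCEset P d src rng mul ↑S}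

/-- Given that `a` is an initial segment of `c`, the (unique) complementary segment;
junk value `c` otherwise. -/
def tail (src rng : Λ → Λ) (mul : Λ → Λ → Λ) (a c : Λ) : Λ :=
  if h : IsInit src rng mul a c then h.choose else c

section CstarFamilies

variable (P : Submonoid G) (d : Λ → G) (src rng : Λ → Λ) (mul : Λ → Λ → Λ)
variable {B : Type*} [CStarAlgebra B] [PartialOrder B] [StarOrderedRing B]

/-- A Toeplitz `E`-family in a C*-algebra `B` (conditions (1)–(4)). -/
structure IsToeplitzFamily (t : Λ → B) : Prop where
  vertex_sa : ∀ v, d v = 1 → IsSelfAdjoint (t v)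
  vertex_idem : ∀ v, d v = 1 → t v * t v = t v
  vertex_orth : ∀ v w, d v = 1 → d w = 1 → v ≠ w → t v * t w = 0
  mul_eq : ∀ a b, rng a = src b → t a * t b = t (mul a b)
  star_mul_self : ∀ a, star (t a) * t a = t (rng a)
  dom : ∀ p : G, p ∈ P → p ≠ 1 → ∀ v, d v = 1 → ∀ F : Finset Λ,
    (∀ a ∈ F, d a = p ∧ src a = v) → (∑ a ∈ F, t a * star (t a)) ≤ t v

/-- The Nica-covariance/Cuntz–Krieger relation (5):
`tμ* tν = ∑_{γ = μα = νβ ∈ MCE(μ,ν)} tα tβ*`. -/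
def TCKrel (t : Λ → B) : Prop :=
  ∀ μ ν : Λ, ∀ M : Finset Λ, ↑M = MCE P d src rng mul μ ν →
    star (t μ) * t ν =
      ∑ γ ∈ M, t (tail src rng mul μ γ) * star (t (tail src rng mul ν γ))

/-- A Toeplitz–Cuntz–Krieger `E`-family: conditions (1)–(5). -/
def IsTCKFamily (t : Λ → B) : Prop :=
  IsToeplitzFamily P d src rng mul t ∧ TCKrel P d src rng mul t

/-- Condition (†): for every finite `R ⊆ P∖{1}`, every vertex `v`, and all finite sets
`F_p ⊆ s_p⁻¹(v)` (`p ∈ R`), the product `∏_{p ∈ R} (t_v − ∑_{a ∈ F_p} t_a t_a*)` is nonzero.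
(The factors commute, so the product is stated for an arbitrary enumeration of `R`.) -/
def Dagger (t : Λ → B) : Prop :=
  ∀ R : List G, R.Nodup → (∀ p ∈ R, p ∈ P ∧ p ≠ 1) →
    ∀ v, d v = 1 → ∀ Fp : G → Finset Λ,
      (∀ p ∈ R, ∀ a ∈ Fp p, d a = p ∧ src a = v) →
        (R.map fun p => t v - ∑ a ∈ Fp p, t a * star (t a)).prod ≠ 0

/-- The projection `Q^{∨F}_l = t_l t_l* ∏_{l α ∈ ∨F, d α ≠ 1} (t_{s(l)} − t_{lα} t_{lα}*)`.
(The factors commute, so the product is computed over an arbitrary enumeration.) -/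
def Qproj (t : Λ → B) (F : Finset Λ) (l : Λ) : B :=
  if h : {α : Λ | d α ≠ 1 ∧ rng l = src α ∧ mul l α ∈ vee P d src rng mul F}.Finite then
    t l * star (t l) *
      (h.toFinset.toList.map fun α =>
        t (src l) - t (mul l α) * star (t (mul l α))).prod
  else 0

end CstarFamilies

/-- The positive cone `ℕ^k` inside `ℤ^k` (written multiplicatively). -/
def posCone (k : ℕ) : Submonoid (Multiplicative (Fin k → ℤ)) where
  carrier := {g | ∀ i, 0 ≤ Multiplicative.toAdd g i}
  mul_mem' := by
    intro a b ha hb i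
    simpa using add_nonneg (ha i) (hb i)
  one_mem' := by
    intro i
    simp

/-- The `i`-th standard generator of `ℕ^k ⊆ ℤ^k`. -/
def egen (k : ℕ) (i : Fin k) : Multiplicative (Fin k → ℤ) :=
  Multiplicative.ofAdd (Pi.single i 1)

end PSG
namespace PSG

section Abstract

variable {B : Type*} [Ring B]

lemma list_prod_mul_eq_self (L : List B) (c : B) (h : ∀ f ∈ L, f * c = c) :
    L.prod * c = c := by
  induction L with
  | nil => simp
  | cons f L ih =>
    rw [List.prod_cons, mul_assoc, ih fun g hg => h g (List.mem_cons_of_mem _ hg),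
      h f List.mem_cons_self]

lemma list_prod_mul_eq_zero (L : List B) (c : B) (hcomm : ∀ f ∈ L, Commute f c)
    (h : ∃ f ∈ L, f * c = 0) : L.prod * c = 0 := by
  induction L with
  | nil => simp at h
  | cons f L ih =>
    have hL : ∀ g ∈ L, Commute g c := fun g hg => hcomm g (List.mem_cons_of_mem _ hg)
    obtain ⟨g, hg, hgc⟩ := h
    rw [List.prod_cons, mul_assoc]
    rcases List.mem_cons.1 hg with rfl | hg
    · rw [(Commute.list_prod_left L c hL).eq, ← mul_assoc, hgc, zero_mul]
    · rw [ih hL ⟨g, hg, hgc⟩, mul_zero]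

/-- Möbius-type inversion for projections `p x` indexed by a finite set partially ordered by `le`, where
`Q x` is the part of `p x` orthogonal to every `p z` with `z` strictly above `x`. -/
lemma eq_sum_of_orthogonal_parts {ι : Type*} (X : Finset ι) (le : ι → ι → Prop)
    (hrefl : ∀ x, le x x) (htrans : ∀ x y z, le x y → le y z → le x z)
    (hanti : ∀ x y, le x y → le y x → x = y) (p Q : ι → B)
    (hpp : ∀ x ∈ X, ∀ z ∈ X, le x z → p z * p x = p z)
    (hpx : ∀ x ∈ X, p x * p x = p x)
    (hpQ : ∀ y ∈ X, ∀ z ∈ X, le z y → p z * Q y = Q y)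
    (hpQ_zero : ∀ y ∈ X, ∀ z ∈ X, ¬ le z y → p z * Q y = 0)
    (hQp_zero : ∀ y ∈ X, ∀ z ∈ X, le y z → y ≠ z → Q y * p z = 0)
    (hQp : ∀ x ∈ X, Q x * p x = Q x)
    (hQ_fix : ∀ x ∈ X, ∀ c, (∀ z ∈ X, le x z → x ≠ z → p z * c = 0) → p x * c = c →
      Q x * c = c) :
    ∀ x ∈ X, p x = ∑ y ∈ X with le x y, Q y := by
  intro x
  induction hn : (X.filter (le x)).card using Nat.strong_induction_on generalizing x with
  | _ n ih =>
  intro hx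
  have ih' : ∀ z ∈ X, le x z → x ≠ z → p z = ∑ y ∈ X with le z y, Q y := by
    intro z hz hxz hne
    refine ih _ ?_ z rfl hz
    rw [← hn]
    refine Finset.card_lt_card (Finset.ssubset_iff_subset_ne.2 ⟨fun y hy => ?_, fun h => ?_⟩)
    · rw [Finset.mem_filter] at hy ⊢
      exact ⟨hy.1, htrans _ _ _ hxz hy.2⟩
    · have hmem : x ∈ X.filter (le z) := by
        rw [h]
        exact Finset.mem_filter.2 ⟨hx, hrefl x⟩
      exact hne (hanti _ _ hxz (Finset.mem_filter.1 hmem).2)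
  set S := ∑ y ∈ (X.filter (le x)).erase x, Q y with hS
  have hmemS : ∀ y ∈ (X.filter (le x)).erase x, y ∈ X ∧ le x y ∧ x ≠ y := by
    intro y hy
    rw [Finset.mem_erase, Finset.mem_filter] at hy
    exact ⟨hy.2.1, hy.2.2, hy.1.symm⟩
  have hpS : p x * S = S := by
    rw [hS, Finset.mul_sum]
    exact Finset.sum_congr rfl fun y hy => hpQ y (hmemS y hy).1 x hx (hmemS y hy).2.1
  have hpzS : ∀ z ∈ X, le x z → x ≠ z → p z * S = p z := by
    intro z hz hxz hne
    have hsub : X.filter (le z) ⊆ (X.filter (le x)).erase x := by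
      intro y hy
      rw [Finset.mem_filter] at hy
      rw [Finset.mem_erase, Finset.mem_filter]
      refine ⟨?_, hy.1, htrans _ _ _ hxz hy.2⟩
      rintro rfl
      exact hne (hanti _ _ hxz hy.2)
    rw [hS, Finset.mul_sum, ← Finset.sum_subset hsub, ih' z hz hxz hne]
    · refine Finset.sum_congr rfl fun y hy => ?_
      rw [Finset.mem_filter] at hy
      rw [← ih' z hz hxz hne]
      exact hpQ y hy.1 z hz hy.2
    · intro y hy hyz
      refine hpQ_zero y (hmemS y hy).1 z hz fun hle => hyz ?_
      exact Finset.mem_filter.2 ⟨(hmemS y hy).1, hle⟩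
  have hQS : Q x * S = 0 := by
    rw [hS, Finset.mul_sum]
    refine Finset.sum_eq_zero fun y hy => ?_
    obtain ⟨hyX, hxy, hne⟩ := hmemS y hy
    rw [← hpQ y hyX y hyX (hrefl y), ← mul_assoc, hQp_zero x hx y hyX hxy hne, zero_mul]
  have hfix : Q x * (p x - S) = p x - S := by
    refine hQ_fix x hx _ (fun z hz hxz hne => ?_) ?_
    · rw [mul_sub, hpp x hx z hz hxz, hpzS z hz hxz hne, sub_self]
    · rw [mul_sub, hpS, hpx x hx]
  rw [mul_sub, hQS, hQp x hx, sub_zero] at hfix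
  rw [← Finset.add_sum_erase _ _ (Finset.mem_filter.2 ⟨hx, hrefl x⟩), ← hS, hfix,
    sub_add_cancel]

end Abstract

section ProductSystem

variable {G : Type*} [Group G] {Λ : Type*} {P : Submonoid G} {d : Λ → G} {src rng : Λ → Λ}
  {mul : Λ → Λ → Λ}

lemma qle_trans {a b c : G} (hab : qle P a b) (hbc : qle P b c) : qle P a c := by
  have h := P.mul_mem hab hbc
  simpa only [qle, mul_assoc, mul_inv_cancel_left] using h

namespace IsProductSystem

lemma src_src (h : IsProductSystem P d src rng mul) (a : Λ) : src (src a) = src a :=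
  h.src_vertex _ (h.d_src a)

lemma src_rng (h : IsProductSystem P d src rng mul) (a : Λ) : src (rng a) = rng a :=
  h.src_vertex _ (h.d_rng a)

lemma rng_src (h : IsProductSystem P d src rng mul) (a : Λ) : rng (src a) = src a :=
  h.rng_vertex _ (h.d_src a)

lemma mul_eq_self_iff (h : IsProductSystem P d src rng mul) {a b : Λ} (hab : rng a = src b) :
    mul a b = a ↔ d b = 1 := by
  constructor
  · intro heq
    have hd := h.d_mul a b hab
    rw [heq] at hd
    exact mul_eq_left.1 hd.symm
  · intro hb
    rw [← h.src_vertex b hb, ← hab, h.mul_rng_self]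

lemma mul_left_cancel (h : IsProductSystem P d src rng mul) {a b c : Λ} (hab : rng a = src b)
    (hac : rng a = src c) (heq : mul a b = mul a c) : b = c := by
  have hd : d b = d c := by
    have := h.d_mul a b hab
    rw [heq, h.d_mul a c hac] at this
    exact (mul_right_injective _ this).symm
  have := (h.factor (d a) (d b) (h.d_mem a) (h.d_mem b) _ (h.d_mul a b hab)).unique
    (y₁ := (a, b)) (y₂ := (a, c)) ⟨rfl, rfl, hab, rfl⟩ ⟨rfl, hd.symm, hac, heq.symm⟩
  exact congrArg Prod.snd this

lemma isInit_refl (h : IsProductSystem P d src rng mul) (a : Λ) : IsInit src rng mul a a :=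
  ⟨rng a, (h.src_rng a).symm, h.mul_rng_self a⟩

lemma isInit_trans (h : IsProductSystem P d src rng mul) (a b c : Λ)
    (hab : IsInit src rng mul a b) (hbc : IsInit src rng mul b c) : IsInit src rng mul a c := by
  obtain ⟨x, hx, rfl⟩ := hab
  obtain ⟨y, hy, rfl⟩ := hbc
  rw [h.rng_mul a x hx] at hy
  exact ⟨mul x y, by rw [h.src_mul x y hy, hx], (h.mul_assoc' a x y hx hy).symm⟩

lemma isInit_antisymm (h : IsProductSystem P d src rng mul) (hQLO : QuasiLatticeOrdered P)
    (a b : Λ) (hab : IsInit src rng mul a b) (hba : IsInit src rng mul b a) : a = b := by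
  obtain ⟨x, hx, rfl⟩ := hab
  obtain ⟨y, hy, hya⟩ := hba
  have hd := h.d_mul _ _ hy
  rw [hya, h.d_mul a x hx, mul_assoc] at hd
  have hxy : d x * d y = 1 := mul_eq_left.1 hd.symm
  have hx1 : d x = 1 := hQLO.1 _ (h.d_mem x) (by
    rw [inv_eq_of_mul_eq_one_right hxy]
    exact h.d_mem y)
  exact ((h.mul_eq_self_iff hx).2 hx1).symm

lemma isInit_src (h : IsProductSystem P d src rng mul) (a : Λ) : IsInit src rng mul (src a) a :=
  ⟨a, h.rng_src a, h.src_mul_self a⟩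

lemma src_eq_of_isInit (h : IsProductSystem P d src rng mul) {a b : Λ}
    (hab : IsInit src rng mul a b) : src b = src a := by
  obtain ⟨x, hx, rfl⟩ := hab
  exact h.src_mul a x hx

lemma mem_vee_of_mem (h : IsProductSystem P d src rng mul) {F : Finset Λ} {a : Λ} (ha : a ∈ F) :
    a ∈ vee P d src rng mul F := by
  refine ⟨{a}, Finset.singleton_nonempty a, Finset.singleton_subset_iff.2 ha, ?_, h.d_mem a,
    ?_, ?_⟩
  · simpa using h.isInit_refl a
  · simp [qle]
  · intro r _ hr
    exact hr _ (by simp)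

end IsProductSystem

lemma mem_vee_of_mem_MCE {F : Finset Λ} {x y w : Λ} (hx : x ∈ vee P d src rng mul F)
    (hy : y ∈ vee P d src rng mul F) (hPS : IsProductSystem P d src rng mul)
    (hw : w ∈ MCE P d src rng mul x y) : w ∈ vee P d src rng mul F := by
  obtain ⟨S, hS, hSF, hxS, -, hxub, hxlub⟩ := hx
  obtain ⟨S', -, hSF', hyS, -, hyub, hylub⟩ := hy
  obtain ⟨hxw, hyw, ⟨hwP, hdx, hdy⟩, hlub⟩ := hw
  refine ⟨S ∪ S', hS.mono Finset.subset_union_left, Finset.union_subset hSF hSF', ?_, hwP, ?_, ?_⟩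
  · intro a ha
    rw [Finset.mem_coe, Finset.mem_union] at ha
    rcases ha with ha | ha
    · exact hPS.isInit_trans _ _ _ (hxS a ha) hxw
    · exact hPS.isInit_trans _ _ _ (hyS a ha) hyw
  · rintro _ ⟨a, ha, rfl⟩
    rw [Finset.mem_coe, Finset.mem_union] at ha
    rcases ha with ha | ha
    · exact qle_trans (hxub _ ⟨a, ha, rfl⟩) hdx
    · exact qle_trans (hyub _ ⟨a, ha, rfl⟩) hdy
  · intro r hr hub
    refine hlub r ⟨hr, hxlub r hr ?_, hylub r hr ?_⟩
    · rintro _ ⟨a, ha, rfl⟩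
      exact hub _ ⟨a, Finset.mem_coe.2 (Finset.mem_union_left _ ha), rfl⟩
    · rintro _ ⟨a, ha, rfl⟩
      exact hub _ ⟨a, Finset.mem_coe.2 (Finset.mem_union_right _ ha), rfl⟩

lemma mul_tail {a c : Λ} (h : IsInit src rng mul a c) :
    rng a = src (tail src rng mul a c) ∧ mul a (tail src rng mul a c) = c := by
  rw [tail, dif_pos h]
  exact h.choose_spec

variable {B : Type*} [CStarAlgebra B] {t : Λ → B}

/-- The range projection of `t a`. -/
def rangeProj (t : Λ → B) (a : Λ) : B := t a * star (t a)

lemma star_rangeProj (a : Λ) : star (rangeProj t a) = rangeProj t a := by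
  simp [rangeProj]

/-- The set of `α` of nontrivial degree extending `l` inside `∨F`. -/
def properExtensions (P : Submonoid G) (d : Λ → G) (src rng : Λ → Λ) (mul : Λ → Λ → Λ)
    (F : Finset Λ) (l : Λ) : Set Λ :=
  {α | d α ≠ 1 ∧ rng l = src α ∧ mul l α ∈ vee P d src rng mul F}

/-- The factors of `Q^{∨F}_l` other than the range projection of `t l`. -/
def gapFactors (mul : Λ → Λ → Λ) (src : Λ → Λ) (t : Λ → B) (l : Λ) (A : Finset Λ) : List B :=
  A.toList.map fun α => t (src l) - rangeProj t (mul l α)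

lemma Qproj_eq {F : Finset Λ} {l : Λ} (h : (properExtensions P d src rng mul F l).Finite) :
    Qproj P d src rng mul t F l =
      rangeProj t l * (gapFactors mul src t l h.toFinset).prod :=
  dif_pos h

variable [PartialOrder B]

namespace IsToeplitzFamily

lemma rangeProj_mul_self (ht : IsToeplitzFamily P d src rng mul t)
    (hPS : IsProductSystem P d src rng mul) (a : Λ) : rangeProj t a * t a = t a := by
  rw [rangeProj, mul_assoc, ht.star_mul_self, ht.mul_eq a _ (hPS.src_rng a).symm,
    hPS.mul_rng_self]

lemma rangeProj_mul_of_isInit (ht : IsToeplitzFamily P d src rng mul t)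
    (hPS : IsProductSystem P d src rng mul) {a b : Λ} (hab : IsInit src rng mul a b) :
    rangeProj t a * rangeProj t b = rangeProj t b := by
  obtain ⟨x, hx, rfl⟩ := hab
  conv_lhs => rw [rangeProj.eq_def t (mul a x)]
  rw [← mul_assoc, ← ht.mul_eq a x hx, ← mul_assoc, ht.rangeProj_mul_self hPS, ht.mul_eq a x hx,
    rangeProj]

lemma rangeProj_vertex (ht : IsToeplitzFamily P d src rng mul t) {v : Λ} (hv : d v = 1) :
    rangeProj t v = t v := by
  rw [rangeProj, (ht.vertex_sa v hv).star_eq, ht.vertex_idem v hv]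

end IsToeplitzFamily

lemma rangeProj_mul_rangeProj (ht : IsTCKFamily P d src rng mul t) {x y : Λ} (M : Finset Λ)
    (hM : ↑M = MCE P d src rng mul x y) :
    rangeProj t x * rangeProj t y = ∑ w ∈ M, rangeProj t w := by
  have hrel : rangeProj t x * rangeProj t y = t x * (star (t x) * t y) * star (t y) := by
    simp only [rangeProj, mul_assoc]
  rw [hrel, ht.2 x y M hM, Finset.mul_sum, Finset.sum_mul]
  refine Finset.sum_congr rfl fun w hw => ?_
  have hw' : w ∈ MCE P d src rng mul x y := by
    rw [← hM]
    exact hw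
  obtain ⟨hx, hxw⟩ := mul_tail hw'.1
  obtain ⟨hy, hyw⟩ := mul_tail hw'.2.1
  rw [← mul_assoc, ht.1.mul_eq _ _ hx, hxw, mul_assoc, ← star_mul, ht.1.mul_eq _ _ hy, hyw,
    rangeProj]

lemma commute_rangeProj (ht : IsTCKFamily P d src rng mul t)
    (hFA : FinitelyAligned P d src rng mul) (x y : Λ) :
    Commute (rangeProj t x) (rangeProj t y) := by
  have h := rangeProj_mul_rangeProj ht _ (hFA x y).coe_toFinset
  have h' := congrArg star h
  simp only [star_mul, star_rangeProj, star_sum] at h'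
  exact h.trans h'.symm

lemma commute_of_mem_gapFactors (ht : IsTCKFamily P d src rng mul t)
    (hPS : IsProductSystem P d src rng mul) (hFA : FinitelyAligned P d src rng mul) {l x : Λ}
    {A : Finset Λ} {f : B} (hf : f ∈ gapFactors mul src t l A) : Commute f (rangeProj t x) := by
  obtain ⟨α, -, rfl⟩ := List.mem_map.1 hf
  rw [← ht.1.rangeProj_vertex (hPS.d_src l)]
  exact (commute_rangeProj ht hFA _ _).sub_left (commute_rangeProj ht hFA _ _)

lemma gapFactors_prod_mul_eq_zero (ht : IsTCKFamily P d src rng mul t)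
    (hPS : IsProductSystem P d src rng mul) (hFA : FinitelyAligned P d src rng mul)
    {F : Finset Λ} {y z : Λ} (h : (properExtensions P d src rng mul F y).Finite)
    (hz : z ∈ vee P d src rng mul F) (hyz : IsInit src rng mul y z) (hne : y ≠ z) :
    (gapFactors mul src t y h.toFinset).prod * rangeProj t z = 0 := by
  refine list_prod_mul_eq_zero _ _ (fun f hf => commute_of_mem_gapFactors ht hPS hFA hf) ?_
  have hyz' := hyz
  obtain ⟨α, hα, rfl⟩ := hyz
  refine ⟨t (src y) - rangeProj t (mul y α), List.mem_map.2 ⟨α, ?_, rfl⟩, ?_⟩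
  · rw [Finset.mem_toList, Set.Finite.mem_toFinset]
    exact ⟨fun h1 => hne ((hPS.mul_eq_self_iff hα).2 h1).symm, hα, hz⟩
  · rw [sub_mul, ← ht.1.rangeProj_vertex (hPS.d_src y),
      ht.1.rangeProj_mul_of_isInit hPS (hPS.isInit_trans _ _ _ (hPS.isInit_src y) hyz'),
      ht.1.rangeProj_mul_of_isInit hPS (hPS.isInit_refl _), sub_self]

/-- The range projection of `t x` is the sum of the `Q^{∨F}_y` over the extensions `y` of `x`, in
any finite subset of `∨F` that is closed under extensions in `∨F`. -/
lemma rangeProj_eq_sum_Qproj (hQLO : QuasiLatticeOrdered P)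
    (hPS : IsProductSystem P d src rng mul) (hFA : FinitelyAligned P d src rng mul)
    (ht : IsTCKFamily P d src rng mul t) {F X : Finset Λ}
    (hX : ∀ y ∈ X, y ∈ vee P d src rng mul F)
    (hup : ∀ y ∈ X, ∀ z ∈ vee P d src rng mul F, IsInit src rng mul y z → z ∈ X)
    {x : Λ} (hx : x ∈ X) :
    rangeProj t x = ∑ y ∈ X with IsInit src rng mul x y, Qproj P d src rng mul t F y := by
  have hfin : ∀ y ∈ X, (properExtensions P d src rng mul F y).Finite := by
    intro y hy
    refine Set.Finite.of_finite_image (f := mul y) (X.finite_toSet.subset ?_) ?_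
    · rintro _ ⟨α, hα, rfl⟩
      exact hup y hy _ hα.2.2 ⟨α, hα.2.1, rfl⟩
    · intro α hα β hβ heq
      exact hPS.mul_left_cancel hα.2.1 hβ.2.1 heq
  have hinit {a b : Λ} (hab : IsInit src rng mul a b) :
      rangeProj t a * rangeProj t b = rangeProj t b := ht.1.rangeProj_mul_of_isInit hPS hab
  have hcomm (a b : Λ) : Commute (rangeProj t a) (rangeProj t b) := commute_rangeProj ht hFA a b
  have hgap {y : Λ} (hy : y ∈ X) (z : Λ) :
      Commute (gapFactors mul src t y (hfin y hy).toFinset).prod (rangeProj t z) :=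
    Commute.list_prod_left _ _ fun f hf => commute_of_mem_gapFactors ht hPS hFA hf
  refine eq_sum_of_orthogonal_parts X (IsInit src rng mul) hPS.isInit_refl hPS.isInit_trans
    (hPS.isInit_antisymm hQLO) (rangeProj t) (Qproj P d src rng mul t F) ?_ ?_ ?_ ?_ ?_ ?_ ?_ x hx
  · intro x _ z _ hxz
    rw [(hcomm z x).eq, hinit hxz]
  · intro x _
    exact hinit (hPS.isInit_refl x)
  · intro y hy z _ hzy
    rw [Qproj_eq (hfin y hy), ← mul_assoc, hinit hzy]
  · intro y hy z hz hzy
    rw [Qproj_eq (hfin y hy), ← mul_assoc,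
      rangeProj_mul_rangeProj ht _ (hFA z y).coe_toFinset, Finset.sum_mul]
    refine Finset.sum_eq_zero fun w hw => ?_
    rw [Set.Finite.mem_toFinset] at hw
    rw [← (hgap hy w).eq]
    refine gapFactors_prod_mul_eq_zero ht hPS hFA _
      (mem_vee_of_mem_MCE (hX z hz) (hX y hy) hPS hw) hw.2.1 ?_
    rintro rfl
    exact hzy hw.1
  · intro y hy z hz hyz hne
    rw [Qproj_eq (hfin y hy), mul_assoc,
      gapFactors_prod_mul_eq_zero ht hPS hFA _ (hX z hz) hyz hne, mul_zero]
  · intro x hx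
    rw [Qproj_eq (hfin x hx), mul_assoc, (hgap hx x).eq, ← mul_assoc,
      hinit (hPS.isInit_refl x)]
  · intro x hx c hc hxc
    rw [Qproj_eq (hfin x hx), mul_assoc, list_prod_mul_eq_self _ c, hxc]
    intro f hf
    obtain ⟨α, hα, rfl⟩ := List.mem_map.1 hf
    rw [Finset.mem_toList, Set.Finite.mem_toFinset] at hα
    obtain ⟨hα1, hxα, hmem⟩ := hα
    have hle : IsInit src rng mul x (mul x α) := ⟨α, hxα, rfl⟩
    rw [sub_mul, hc _ (hup x hx _ hmem hle) hle
      fun h => hα1 ((hPS.mul_eq_self_iff hxα).1 h.symm), sub_zero,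
      ← ht.1.rangeProj_vertex (hPS.d_src x), ← hxc, ← mul_assoc, hinit (hPS.isInit_src x)]

end ProductSystem

/-- Equation (7.2) and its refinement: `∑_{λ∈∨F} Q^{∨F}_λ = ∑_{v∈s(F)} t_v`, and for every
`λ ∈ ∨F`, `t_λ t_λ* = ∑_{λλ'∈∨F} Q^{∨F}_{λλ'}`. -/
theorem stmt6 {G : Type*} [Group G] {Λ : Type*} (P : Submonoid G)
    (hQLO : QuasiLatticeOrdered P)
    (d : Λ → G) (src rng : Λ → Λ) (mul : Λ → Λ → Λ)
    (hPS : IsProductSystem P d src rng mul)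
    (hFA : FinitelyAligned P d src rng mul)
    {B : Type*} [CStarAlgebra B] [PartialOrder B] [StarOrderedRing B]
    (t : Λ → B) (ht : IsTCKFamily P d src rng mul t)
    (F : Finset Λ) (hsrc : ∀ a ∈ F, src a ∈ F) :
    (∀ M : Finset Λ, ↑M = vee P d src rng mul F →
      ∑ l ∈ M, Qproj P d src rng mul t F l = ∑ v ∈ F.image src, t v) ∧
    (∀ l ∈ vee P d src rng mul F, ∀ T : Finset Λ,
      (↑T = {b : Λ | rng l = src b ∧ mul l b ∈ vee P d src rng mul F}) →
      t l * star (t l) = ∑ b ∈ T, Qproj P d src rng mul t F (mul l b)) := by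
  constructor
  · intro M hM
    have hmem : ∀ y, y ∈ M ↔ y ∈ vee P d src rng mul F := fun y => by
      rw [← hM, Finset.mem_coe]
    have hmaps : ∀ y ∈ M, src y ∈ F.image src := by
      intro y hy
      obtain ⟨S, ⟨a, ha⟩, hSF, hyS, -⟩ := (hmem y).1 hy
      exact Finset.mem_image.2 ⟨a, hSF ha, (hPS.src_eq_of_isInit (hyS a ha)).symm⟩
    rw [← Finset.sum_fiberwise_of_maps_to hmaps]
    refine Finset.sum_congr rfl fun v hv => ?_
    obtain ⟨a, ha, rfl⟩ := Finset.mem_image.1 hv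
    rw [← ht.1.rangeProj_vertex (hPS.d_src a), rangeProj_eq_sum_Qproj hQLO hPS hFA ht
      (fun y hy => (hmem y).1 hy) (fun _ _ z hz _ => (hmem z).2 hz)
      ((hmem _).2 (hPS.mem_vee_of_mem (hsrc a ha)))]
    refine Finset.sum_congr (Finset.filter_congr fun y _ => ⟨fun h => ?_, fun h => ?_⟩)
      fun _ _ => rfl
    · rw [← h]
      exact hPS.isInit_src y
    · rw [hPS.src_eq_of_isInit h, hPS.src_src]
  · intro l hl T hT
    have hmem : ∀ b, b ∈ T ↔ rng l = src b ∧ mul l b ∈ vee P d src rng mul F := fun b => by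
      rw [← Finset.mem_coe, hT, Set.mem_ofPred_eq]
    have hlX : l ∈ T.image (mul l) := Finset.mem_image.2 ⟨rng l, (hmem _).2
      ⟨(hPS.src_rng l).symm, by rwa [hPS.mul_rng_self]⟩, hPS.mul_rng_self l⟩
    have hle : ∀ y ∈ T.image (mul l), IsInit src rng mul l y := by
      intro y hy
      obtain ⟨b, hb, rfl⟩ := Finset.mem_image.1 hy
      exact ⟨b, ((hmem b).1 hb).1, rfl⟩
    have hsum := rangeProj_eq_sum_Qproj (F := F) (X := T.image (mul l)) hQLO hPS hFA ht ?_ ?_ hlX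
    · rw [Finset.filter_true_of_mem hle, Finset.sum_image] at hsum
      · exact hsum
      · intro a ha b hb heq
        exact hPS.mul_left_cancel ((hmem a).1 ha).1 ((hmem b).1 hb).1 heq
    · intro y hy
      obtain ⟨b, hb, rfl⟩ := Finset.mem_image.1 hy
      exact ((hmem b).1 hb).2
    · intro y hy z hz hyz
      obtain ⟨b, hb, rfl⟩ := hPS.isInit_trans _ _ _ (hle y hy) hyz
      exact Finset.mem_image_of_mem _ ((hmem b).2 ⟨hb, hz⟩)

end PSG
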